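/- If Γ ⊢_I A, then there is a deduction in normal form with an occurrence of A as the conclusion and occurrences of some of the formulas in Γ as the undischarged assumptions. -/

import Mathlib

set_option autoImplicit false

/-- Formulas of intuitionistic propositional logic: atomic formulas (indexed by
natural numbers), `⊥` (`falsum`), conjunction, disjunction and implication.
Following the paper, `⊥` is a (nullary) connective and not an atomic formula. -/
inductive Formula : Type
  | atom : ℕ → Formula
  | falsum : Formula
  | and : Formula → Formula → Formula
  | or : Formula → Formula → Formula
  | imp : Formula → Formula → Formula
  deriving DecidableEq

/-- Deductions in Negri and von Plato's system **I** of intuitionistic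
propositional logic with general introduction and elimination rules, indexed by
their conclusion.  Each constructor corresponds to a rule of the system:

* `ass A` : the one-formula deduction of `A` from the open assumption `A`;
* `andI d₁ d₂ d₃` : from deductions `d₁` of `A`, `d₂` of `B` (the specific
  premises) and a deduction `d₃` of `C` (the arbitrary premise) in which
  assumptions of the form `A ∧ B` may be discharged, infer `C`;
* `impI A d₁ d₂` : from a deduction `d₁` of `B` in which assumptions `A` may be
  discharged and a deduction `d₂` of `C` in which assumptions `A ⊃ B` may be
  discharged, infer `C`;
* `orI₁ B d₁ d₂` / `orI₂ A d₁ d₂` : from a deduction of `A` (respectively of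
  `B`) and a deduction of `C` in which assumptions `A ∨ B` may be discharged,
  infer `C`;
* `andE d₁ d₂` : from a deduction of the major premise `A ∧ B` and a deduction
  of `C` in which assumptions `A` and `B` may be discharged, infer `C`;
* `impE d₁ d₂ d₃` : from a deduction of the major premise `A ⊃ B`, a deduction
  of the minor premise `A`, and a deduction of `C` in which assumptions `B`
  may be discharged, infer `C`;
* `orE d₁ d₂ d₃` : from a deduction of the major premise `A ∨ B` and two
  deductions of `C` in which assumptions `A`, respectively `B`, may be
  discharged, infer `C`;
* `falsumE d` : from a deduction of `⊥` infer any `C`.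

Discharge is recorded by the function `hyps` below: a rule application
discharges all open occurrences of the indicated formulas in the indicated
subdeductions. -/
inductive Ded : Formula → Type
  | ass (A : Formula) : Ded A
  | andI {A B C : Formula} (d₁ : Ded A) (d₂ : Ded B) (d₃ : Ded C) : Ded C
  | impI (A : Formula) {B C : Formula} (d₁ : Ded B) (d₂ : Ded C) : Ded C
  | orI₁ {A : Formula} (B : Formula) {C : Formula} (d₁ : Ded A) (d₂ : Ded C) : Ded C
  | orI₂ (A : Formula) {B C : Formula} (d₁ : Ded B) (d₂ : Ded C) : Ded C
  | andE {A B C : Formula} (d₁ : Ded (Formula.and A B)) (d₂ : Ded C) : Ded C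
  | impE {A B C : Formula} (d₁ : Ded (Formula.imp A B)) (d₂ : Ded A) (d₃ : Ded C) : Ded C
  | orE {A B C : Formula} (d₁ : Ded (Formula.or A B)) (d₂ : Ded C) (d₃ : Ded C) : Ded C
  | falsumE {C : Formula} (d : Ded Formula.falsum) : Ded C

/-- The set of undischarged (open) assumptions of a deduction. -/
def hyps : ∀ {C : Formula}, Ded C → Set Formula
  | _, .ass A => {A}
  | _, @Ded.andI A B _ d₁ d₂ d₃ => hyps d₁ ∪ hyps d₂ ∪ (hyps d₃ \ {Formula.and A B})
  | _, @Ded.impI A B _ d₁ d₂ => (hyps d₁ \ {A}) ∪ (hyps d₂ \ {Formula.imp A B})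
  | _, @Ded.orI₁ A B _ d₁ d₂ => hyps d₁ ∪ (hyps d₂ \ {Formula.or A B})
  | _, @Ded.orI₂ A B _ d₁ d₂ => hyps d₁ ∪ (hyps d₂ \ {Formula.or A B})
  | _, @Ded.andE A B _ d₁ d₂ => hyps d₁ ∪ (hyps d₂ \ {A, B})
  | _, @Ded.impE _ B _ d₁ d₂ d₃ => hyps d₁ ∪ hyps d₂ ∪ (hyps d₃ \ {B})
  | _, @Ded.orE A B _ d₁ d₂ d₃ => hyps d₁ ∪ (hyps d₂ \ {A}) ∪ (hyps d₃ \ {B})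
  | _, .falsumE d => hyps d
/-- `d.isAss` holds iff `d` is a one-formula deduction, i.e. an assumption. -/
def Ded.isAss : ∀ {C : Formula}, Ded C → Bool
  | _, .ass _ => true
  | _, _ => false

/-- `MajorOpen F d` : somewhere in `d` there is an occurrence of the formula
`F` as an assumption (a leaf of the tree) that is the major premise of an
application of an elimination rule, and this occurrence is not discharged
within `d` (so that it can be discharged by a rule applied below `d`). -/
def MajorOpen (F : Formula) : ∀ {C : Formula}, Ded C → Prop
  | _, .ass _ => False
  | _, @Ded.andI A B _ d₁ d₂ d₃ =>
      MajorOpen F d₁ ∨ MajorOpen F d₂ ∨ (MajorOpen F d₃ ∧ F ≠ Formula.and A B)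
  | _, @Ded.impI A B _ d₁ d₂ =>
      (MajorOpen F d₁ ∧ F ≠ A) ∨ (MajorOpen F d₂ ∧ F ≠ Formula.imp A B)
  | _, @Ded.orI₁ A B _ d₁ d₂ =>
      MajorOpen F d₁ ∨ (MajorOpen F d₂ ∧ F ≠ Formula.or A B)
  | _, @Ded.orI₂ A B _ d₁ d₂ =>
      MajorOpen F d₁ ∨ (MajorOpen F d₂ ∧ F ≠ Formula.or A B)
  | _, @Ded.andE A B _ d₁ d₂ =>
      (F = Formula.and A B ∧ d₁.isAss = true) ∨ MajorOpen F d₁ ∨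
        (MajorOpen F d₂ ∧ F ≠ A ∧ F ≠ B)
  | _, @Ded.impE A B _ d₁ d₂ d₃ =>
      (F = Formula.imp A B ∧ d₁.isAss = true) ∨ MajorOpen F d₁ ∨ MajorOpen F d₂ ∨
        (MajorOpen F d₃ ∧ F ≠ B)
  | _, @Ded.orE A B _ d₁ d₂ d₃ =>
      (F = Formula.or A B ∧ d₁.isAss = true) ∨ MajorOpen F d₁ ∨
        (MajorOpen F d₂ ∧ F ≠ A) ∨ (MajorOpen F d₃ ∧ F ≠ B)
  | _, @Ded.falsumE _ d => (F = Formula.falsum ∧ d.isAss = true) ∨ MajorOpen F d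

/-- `HasMaxFormula d` : the deduction `d` contains a maximal formula, i.e. an
occurrence of a formula `A ∗ B` that is at the same time the major premise of
an application of `∗E` and the major assumption discharged by an application of
`∗I`. -/
def HasMaxFormula : ∀ {C : Formula}, Ded C → Prop
  | _, .ass _ => False
  | _, @Ded.andI A B _ d₁ d₂ d₃ =>
      MajorOpen (Formula.and A B) d₃ ∨ HasMaxFormula d₁ ∨ HasMaxFormula d₂ ∨ HasMaxFormula d₃
  | _, @Ded.impI A B _ d₁ d₂ =>
      MajorOpen (Formula.imp A B) d₂ ∨ HasMaxFormula d₁ ∨ HasMaxFormula d₂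
  | _, @Ded.orI₁ A B _ d₁ d₂ =>
      MajorOpen (Formula.or A B) d₂ ∨ HasMaxFormula d₁ ∨ HasMaxFormula d₂
  | _, @Ded.orI₂ A B _ d₁ d₂ =>
      MajorOpen (Formula.or A B) d₂ ∨ HasMaxFormula d₁ ∨ HasMaxFormula d₂
  | _, .andE d₁ d₂ => HasMaxFormula d₁ ∨ HasMaxFormula d₂
  | _, .impE d₁ d₂ d₃ => HasMaxFormula d₁ ∨ HasMaxFormula d₂ ∨ HasMaxFormula d₃
  | _, .orE d₁ d₂ d₃ => HasMaxFormula d₁ ∨ HasMaxFormula d₂ ∨ HasMaxFormula d₃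
  | _, .falsumE d => HasMaxFormula d

/-- The root rule application of `d` has an arbitrary premise; equivalently,
the conclusion of `d` is immediately preceded by an arbitrary premise of the
same shape, so that the conclusion of `d` is the last formula of a segment
(a sequence of occurrences of the same formula each of which is an arbitrary
premise of an application of a rule whose conclusion is the next one). -/
def Ded.endsWithArbitrary : ∀ {C : Formula}, Ded C → Prop
  | _, .ass _ => False
  | _, .falsumE _ => False
  | _, _ => True

/-- `HasMaxSegment d` : the deduction `d` contains a maximal segment, i.e. a
segment (of length `> 1`) whose last formula is the major premise of an
application of an elimination rule.  Since the first formula of a segment is an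
arbitrary premise and each later formula is the conclusion of a rule applied to
an arbitrary premise, this happens exactly when the major premise of some
elimination rule application in `d` is the conclusion of a rule application
that has an arbitrary premise. -/
def HasMaxSegment : ∀ {C : Formula}, Ded C → Prop
  | _, .ass _ => False
  | _, .andI d₁ d₂ d₃ => HasMaxSegment d₁ ∨ HasMaxSegment d₂ ∨ HasMaxSegment d₃
  | _, .impI _ d₁ d₂ => HasMaxSegment d₁ ∨ HasMaxSegment d₂
  | _, .orI₁ _ d₁ d₂ => HasMaxSegment d₁ ∨ HasMaxSegment d₂
  | _, .orI₂ _ d₁ d₂ => HasMaxSegment d₁ ∨ HasMaxSegment d₂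
  | _, .andE d₁ d₂ => d₁.endsWithArbitrary ∨ HasMaxSegment d₁ ∨ HasMaxSegment d₂
  | _, .impE d₁ d₂ d₃ =>
      d₁.endsWithArbitrary ∨ HasMaxSegment d₁ ∨ HasMaxSegment d₂ ∨ HasMaxSegment d₃
  | _, .orE d₁ d₂ d₃ =>
      d₁.endsWithArbitrary ∨ HasMaxSegment d₁ ∨ HasMaxSegment d₂ ∨ HasMaxSegment d₃
  | _, .falsumE d => d.endsWithArbitrary ∨ HasMaxSegment d

/-- A deduction is in normal form if it contains neither maximal formulas nor
maximal segments. -/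
def NormalForm {C : Formula} (d : Ded C) : Prop := ¬ HasMaxFormula d ∧ ¬ HasMaxSegment d

/-- `Γ ⊢_I A` : there is a deduction in I of `A` all of whose undischarged
assumptions belong to `Γ`. -/
def Provable (Γ : Set Formula) (A : Formula) : Prop := ∃ d : Ded A, hyps d ⊆ Γ

/-- Cut-free sequent calculus with sets as contexts. -/
inductive CF : Set Formula → Formula → Prop
  | ax {Γ A} (h : A ∈ Γ) : CF Γ A
  | andR {Γ A B} (h₁ : CF Γ A) (h₂ : CF Γ B) : CF Γ (.and A B)
  | orR₁ {Γ A B} (h₁ : CF Γ A) : CF Γ (.or A B)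
  | orR₂ {Γ A B} (h₁ : CF Γ B) : CF Γ (.or A B)
  | impR {Γ A B} (h₁ : CF (insert A Γ) B) : CF Γ (.imp A B)
  | andL {Γ A B C} (h : Formula.and A B ∈ Γ) (h₁ : CF (insert A (insert B Γ)) C) : CF Γ C
  | impL {Γ A B C} (h : Formula.imp A B ∈ Γ) (h₁ : CF Γ A) (h₂ : CF (insert B Γ) C) : CF Γ C
  | orL {Γ A B C} (h : Formula.or A B ∈ Γ) (h₁ : CF (insert A Γ) C) (h₂ : CF (insert B Γ) C) :
      CF Γ C
  | botL {Γ C} (h : Formula.falsum ∈ Γ) : CF Γ C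

theorem CF.mono {Γ : Set Formula} {A : Formula} (h : CF Γ A) :
    ∀ {Δ : Set Formula}, Γ ⊆ Δ → CF Δ A := by
  induction h with
  | ax h => intro Δ s; exact .ax (s h)
  | andR _ _ i j => intro Δ s; exact .andR (i s) (j s)
  | orR₁ _ i => intro Δ s; exact .orR₁ (i s)
  | orR₂ _ i => intro Δ s; exact .orR₂ (i s)
  | impR _ i => intro Δ s; exact .impR (i (Set.insert_subset_insert s))
  | andL h _ i =>
    intro Δ s; exact .andL (s h) (i (Set.insert_subset_insert (Set.insert_subset_insert s)))
  | impL h _ _ i j => intro Δ s; exact .impL (s h) (i s) (j (Set.insert_subset_insert s))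
  | orL h _ _ i j =>
    intro Δ s
    exact .orL (s h) (i (Set.insert_subset_insert s)) (j (Set.insert_subset_insert s))
  | botL h => intro Δ s; exact .botL (s h)

/-- Covers generated by the left rules. -/
inductive Cov (P : Set Formula → Prop) : Set Formula → Prop
  | ret {Γ} (h : P Γ) : Cov P Γ
  | andL {Γ A B} (h : Formula.and A B ∈ Γ) (h₁ : Cov P (insert A (insert B Γ))) : Cov P Γ
  | impL {Γ A B} (h : Formula.imp A B ∈ Γ) (h₁ : CF Γ A) (h₂ : Cov P (insert B Γ)) : Cov P Γ
  | orL {Γ A B} (h : Formula.or A B ∈ Γ) (h₁ : Cov P (insert A Γ)) (h₂ : Cov P (insert B Γ)) :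
      Cov P Γ
  | botL {Γ} (h : Formula.falsum ∈ Γ) : Cov P Γ

theorem Cov.mono {P : Set Formula → Prop} (hP : ∀ Γ Δ, Γ ⊆ Δ → P Γ → P Δ)
    {Γ : Set Formula} (h : Cov P Γ) : ∀ {Δ : Set Formula}, Γ ⊆ Δ → Cov P Δ := by
  induction h with
  | ret h => intro Δ s; exact .ret (hP _ _ s h)
  | andL h _ i =>
    intro Δ s; exact .andL (s h) (i (Set.insert_subset_insert (Set.insert_subset_insert s)))
  | impL h c _ j => intro Δ s; exact .impL (s h) (c.mono s) (j (Set.insert_subset_insert s))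
  | orL h _ _ i j =>
    intro Δ s
    exact .orL (s h) (i (Set.insert_subset_insert s)) (j (Set.insert_subset_insert s))
  | botL h => intro Δ s; exact .botL (s h)

theorem Cov.bind {P Q : Set Formula → Prop} {Γ : Set Formula} (h : Cov P Γ) :
    (∀ Δ, Γ ⊆ Δ → P Δ → Cov Q Δ) → Cov Q Γ := by
  induction h with
  | ret h => intro f; exact f _ subset_rfl h
  | andL h _ i =>
    intro f
    exact .andL h (i fun Δ s => f Δ
      (((Set.subset_insert _ _).trans (Set.subset_insert _ _)).trans s))
  | impL h c _ j => intro f; exact .impL h c (j fun Δ s => f Δ ((Set.subset_insert _ _).trans s))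
  | orL h _ _ i j =>
    intro f
    exact .orL h (i fun Δ s => f Δ ((Set.subset_insert _ _).trans s))
      (j fun Δ s => f Δ ((Set.subset_insert _ _).trans s))
  | botL h => intro _; exact .botL h

theorem Cov.map {P Q : Set Formula → Prop} {Γ : Set Formula} (h : Cov P Γ)
    (f : ∀ Δ, Γ ⊆ Δ → P Δ → Q Δ) : Cov Q Γ :=
  h.bind fun Δ s p => .ret (f Δ s p)

theorem Cov.run {C : Formula} {Γ : Set Formula} (h : Cov (fun Δ => CF Δ C) Γ) : CF Γ C := by
  induction h with
  | ret h => exact h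
  | andL h _ i => exact .andL h i
  | impL h c _ j => exact .impL h c j
  | orL h _ _ i j => exact .orL h i j
  | botL h => exact .botL h

/-- Forcing. -/
def Force : Formula → Set Formula → Prop
  | .atom n, Γ => CF Γ (.atom n)
  | .falsum, Γ => Cov (fun _ => False) Γ
  | .and A B, Γ => Force A Γ ∧ Force B Γ
  | .or A B, Γ => Cov (fun Δ => Force A Δ ∨ Force B Δ) Γ
  | .imp A B, Γ => ∀ Δ, Γ ⊆ Δ → Force A Δ → Force B Δ

theorem Force.mono : ∀ (A : Formula) (Γ Δ : Set Formula), Γ ⊆ Δ → Force A Γ → Force A Δ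
  | .atom _, _, _, s, h => CF.mono h s
  | .falsum, _, _, s, h => Cov.mono (fun _ _ _ h => h) h s
  | .and A B, _, _, s, h => ⟨Force.mono A _ _ s h.1, Force.mono B _ _ s h.2⟩
  | .or A B, _, _, s, h =>
    Cov.mono (fun _ _ s h => h.imp (Force.mono A _ _ s) (Force.mono B _ _ s)) h s
  | .imp _ _, _, _, s, h => fun Θ t a => h Θ (s.trans t) a

theorem Force.paste : ∀ (A : Formula) (Γ : Set Formula), Cov (Force A) Γ → Force A Γ
  | .atom _, _, h => Cov.run h
  | .falsum, _, h => Cov.bind h fun _ _ p => p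
  | .and A B, _, h =>
    ⟨Force.paste A _ (h.map fun _ _ p => p.1), Force.paste B _ (h.map fun _ _ p => p.2)⟩
  | .or _ _, _, h => Cov.bind h fun _ _ p => p
  | .imp A B, _, h => fun Δ s a => Force.paste B Δ
      ((h.mono (Force.mono (.imp A B)) s).map fun Θ t p => p Θ subset_rfl (Force.mono A _ _ t a))

theorem Force.reify_reflect (A : Formula) :
    (∀ Γ, Force A Γ → CF Γ A) ∧ (∀ Γ, A ∈ Γ → Force A Γ) := by
  induction A with
  | atom n => exact ⟨fun Γ h => h, fun Γ h => CF.ax h⟩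
  | falsum =>
    exact ⟨fun Γ h => Cov.run (Cov.map h fun _ _ p => p.elim), fun Γ h => Cov.botL h⟩
  | and A B iA iB =>
    refine ⟨fun Γ h => .andR (iA.1 _ h.1) (iB.1 _ h.2), fun Γ h => ⟨?_, ?_⟩⟩
    · exact Force.paste A _ (.andL h (.ret (iA.2 _ (by simp))))
    · exact Force.paste B _ (.andL h (.ret (iB.2 _ (by simp))))
  | or A B iA iB =>
    refine ⟨fun Γ h => Cov.run (Cov.map h fun Δ _ p => ?_), fun Γ h => ?_⟩
    · exact p.elim (fun p => .orR₁ (iA.1 _ p)) (fun p => .orR₂ (iB.1 _ p))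
    · exact Cov.orL h (.ret (.inl (iA.2 _ (by simp)))) (.ret (.inr (iB.2 _ (by simp))))
  | imp A B iA iB =>
    refine ⟨fun Γ h => .impR (iB.1 _ (h _ (Set.subset_insert _ _) (iA.2 _ (by simp)))),
      fun Γ h Δ s a => ?_⟩
    exact Force.paste B _ (.impL (s h) (iA.1 _ a) (.ret (iB.2 _ (by simp))))

theorem Force.sound {C : Formula} (d : Ded C) :
    ∀ Γ, (∀ A ∈ hyps d, Force A Γ) → Force C Γ := by
  induction d with
  | ass A => intro Γ h; exact h A (by simp [hyps])
  | @andI A B C d₁ d₂ d₃ i₁ i₂ i₃ =>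
    intro Γ h
    have a := i₁ Γ fun X hX => h X (by simp [hyps, hX])
    have b := i₂ Γ fun X hX => h X (by simp [hyps, hX])
    refine i₃ Γ fun X hX => ?_
    by_cases e : X = .and A B
    · subst e; exact ⟨a, b⟩
    · exact h X (by simp [hyps, hX, e])
  | @impI A B C d₁ d₂ i₁ i₂ =>
    intro Γ h
    refine i₂ Γ fun X hX => ?_
    by_cases e : X = .imp A B
    · subst e
      intro Δ s a
      refine i₁ Δ fun Y hY => ?_
      by_cases e : Y = A
      · subst e; exact a
      · exact Force.mono _ _ _ s (h Y (by simp [hyps, hY, e]))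
    · exact h X (by simp [hyps, hX, e])
  | @orI₁ A B C d₁ d₂ i₁ i₂ =>
    intro Γ h
    have a := i₁ Γ fun X hX => h X (by simp [hyps, hX])
    refine i₂ Γ fun X hX => ?_
    by_cases e : X = .or A B
    · subst e; exact Cov.ret (.inl a)
    · exact h X (by simp [hyps, hX, e])
  | @orI₂ A B C d₁ d₂ i₁ i₂ =>
    intro Γ h
    have a := i₁ Γ fun X hX => h X (by simp [hyps, hX])
    refine i₂ Γ fun X hX => ?_
    by_cases e : X = .or A B
    · subst e; exact Cov.ret (.inr a)
    · exact h X (by simp [hyps, hX, e])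
  | @andE A B C d₁ d₂ i₁ i₂ =>
    intro Γ h
    have a := i₁ Γ fun X hX => h X (by simp [hyps, hX])
    refine i₂ Γ fun X hX => ?_
    by_cases e : X = A
    · subst e; exact a.1
    by_cases e' : X = B
    · subst e'; exact a.2
    · exact h X (by simp [hyps, hX, e, e'])
  | @impE A B C d₁ d₂ d₃ i₁ i₂ i₃ =>
    intro Γ h
    have a := i₁ Γ fun X hX => h X (by simp [hyps, hX])
    have b := i₂ Γ fun X hX => h X (by simp [hyps, hX])
    refine i₃ Γ fun X hX => ?_
    by_cases e : X = B
    · subst e; exact a Γ subset_rfl b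
    · exact h X (by simp [hyps, hX, e])
  | @orE A B C d₁ d₂ d₃ i₁ i₂ i₃ =>
    intro Γ h
    have a := i₁ Γ fun X hX => h X (by simp [hyps, hX])
    refine Force.paste _ _ (Cov.map a fun Δ s p => ?_)
    rcases p with p | p
    · refine i₂ Δ fun X hX => ?_
      by_cases e : X = A
      · subst e; exact p
      · exact Force.mono _ _ _ s (h X (by simp [hyps, hX, e]))
    · refine i₃ Δ fun X hX => ?_
      by_cases e : X = B
      · subst e; exact p
      · exact Force.mono _ _ _ s (h X (by simp [hyps, hX, e]))
  | falsumE d i =>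
    intro Γ h
    exact Force.paste _ _ (Cov.map (i Γ h) fun _ _ p => p.elim)

theorem CF.toNormal {Γ : Set Formula} {A : Formula} (h : CF Γ A) :
    ∃ d : Ded A, hyps d ⊆ Γ ∧ NormalForm d := by
  unfold NormalForm
  induction h with
  | @ax Γ A h => exact ⟨.ass A, by simpa [hyps] using h, by simp [HasMaxFormula, HasMaxSegment]⟩
  | @andR Γ A B _ _ i j =>
    obtain ⟨d, hd, nd⟩ := i
    obtain ⟨e, he, ne⟩ := j
    exact ⟨.andI d e (.ass _), by simp [hyps, hd, he],
      by simp [HasMaxFormula, HasMaxSegment, MajorOpen, nd, ne]⟩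
  | @orR₁ Γ A B _ i =>
    obtain ⟨d, hd, nd⟩ := i
    exact ⟨.orI₁ B d (.ass _), by simp [hyps, hd],
      by simp [HasMaxFormula, HasMaxSegment, MajorOpen, nd]⟩
  | @orR₂ Γ A B _ i =>
    obtain ⟨d, hd, nd⟩ := i
    exact ⟨.orI₂ A d (.ass _), by simp [hyps, hd],
      by simp [HasMaxFormula, HasMaxSegment, MajorOpen, nd]⟩
  | @impR Γ A B _ i =>
    obtain ⟨d, hd, nd⟩ := i
    exact ⟨.impI A d (.ass (.imp A B)), by simpa [hyps] using hd,
      by simp [HasMaxFormula, HasMaxSegment, MajorOpen, nd]⟩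
  | @andL Γ A B C h _ i =>
    obtain ⟨d, hd, nd⟩ := i
    refine ⟨.andE (.ass (.and A B)) d, ?_,
      by simp [HasMaxFormula, HasMaxSegment, Ded.endsWithArbitrary, nd]⟩
    intro X hX
    have := @hd X
    simp only [hyps, Set.mem_union, Set.mem_diff, Set.mem_insert_iff, Set.mem_singleton_iff]
      at hX this
    rcases hX with rfl | hX
    · exact h
    · tauto
  | @impL Γ A B C h _ _ i j =>
    obtain ⟨d, hd, nd⟩ := i
    obtain ⟨e, he, ne⟩ := j
    refine ⟨.impE (.ass (.imp A B)) d e, ?_,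
      by simp [HasMaxFormula, HasMaxSegment, Ded.endsWithArbitrary, nd, ne]⟩
    intro X hX
    have := @hd X
    have := @he X
    simp only [hyps, Set.mem_union, Set.mem_diff, Set.mem_insert_iff, Set.mem_singleton_iff]
      at hX this
    rcases hX with (rfl | hX) | hX
    · exact h
    · tauto
    · tauto
  | @orL Γ A B C h _ _ i j =>
    obtain ⟨d, hd, nd⟩ := i
    obtain ⟨e, he, ne⟩ := j
    refine ⟨.orE (.ass (.or A B)) d e, ?_,
      by simp [HasMaxFormula, HasMaxSegment, Ded.endsWithArbitrary, nd, ne]⟩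
    intro X hX
    have h1 := @hd X
    have h2 := @he X
    simp only [hyps, Set.mem_union, Set.mem_diff, Set.mem_insert_iff, Set.mem_singleton_iff]
      at hX h1 h2
    rcases hX with (rfl | hX) | hX
    · exact h
    · tauto
    · tauto
  | @botL Γ C h =>
    exact ⟨.falsumE (.ass _), by simpa [hyps] using h,
      by simp [HasMaxFormula, HasMaxSegment, Ded.endsWithArbitrary]⟩

/-- If `Γ ⊢_I A`, then there is a deduction in normal form with `A` as its
conclusion and formulas from `Γ` as its undischarged assumptions. -/
theorem normal_form_of_provable (Γ : Set Formula) (A : Formula) (h : Provable Γ A) :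
    ∃ d : Ded A, hyps d ⊆ Γ ∧ NormalForm d := by
  obtain ⟨d, hd⟩ := h
  exact ((Force.reify_reflect A).1 Γ (Force.sound d Γ fun X hX =>
    (Force.reify_reflect X).2 Γ (hd hX))).toNormal
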